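/- arXiv:2504.09591 — 4 statements merged into one kernel-verified Lean document; each statement's English description precedes it below -/
import Mathlib

section
/- Assume (8−6ε²)·αᵢ·αⱼ − ε²·(αᵢ² + αⱼ²) < 0. Then the quadratic U(p,q) = w₁·p² + w₂·p·q + w₃·q² + w₄·p + w₅·q + w₆, with w₁ = −αᵢ·(2−ε²)/2, w₂ = ε·(αᵢ+αⱼ)/2, w₃ = −αⱼ/2, has no local maximum on ℝ²: for every set S ⊆ ℝ² and every point (p₀,q₀) in the interior of S, there exists (p,q) ∈ S with U(p,q) > U(p₀,q₀). In particular, any maximizer of U over S lies on the boundary of S. (This is the content of Lemma 1: under this parameter condition the coalition's optimum cannot be an interior point where both units earn positive profits, so it is optimal to operate at loss, at par, or at maximum price.) -/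
/-- If `(8−6ε²)·αᵢ·αⱼ − ε²·(αᵢ² + αⱼ²) < 0`, the quadratic `U(p,q)`
has no local maximum on ℝ²: for every `S ⊆ ℝ²` and every point `(p₀,q₀)` in the
interior of `S`, there exists `(p,q) ∈ S` with `U(p,q) > U(p₀,q₀)`. -/
theorem stmt7 (ai aj ε : ℝ)
    (hai : 0 < ai) (haj : 0 < aj) (hε0 : 0 < ε) (hε1 : ε ≤ 1)
    (w1 w2 w3 w4 w5 w6 : ℝ)
    (hw1 : w1 = -(ai * (2 - ε ^ 2)) / 2)
    (hw2 : w2 = ε * (ai + aj) / 2)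
    (hw3 : w3 = -aj / 2)
    (hneg : (8 - 6 * ε ^ 2) * ai * aj - ε ^ 2 * (ai ^ 2 + aj ^ 2) < 0)
    (U : ℝ → ℝ → ℝ)
    (hU : ∀ p q, U p q = w1 * p ^ 2 + w2 * p * q + w3 * q ^ 2 + w4 * p + w5 * q + w6) :
    ∀ S : Set (ℝ × ℝ), ∀ p₀ q₀ : ℝ, (p₀, q₀) ∈ interior S →
      ∃ x ∈ S, U p₀ q₀ < U x.1 x.2 := by
  intro S p₀ q₀ hS
  have hQ : 0 < w1 * aj ^ 2 + w2 * aj * w2 + w3 * w2 ^ 2 := by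
    have h : w1 * aj ^ 2 + w2 * aj * w2 + w3 * w2 ^ 2
        = aj / 8 * -((8 - 6 * ε ^ 2) * ai * aj - ε ^ 2 * (ai ^ 2 + aj ^ 2)) := by
      rw [hw1, hw2, hw3]; ring
    rw [h]
    exact mul_pos (by positivity) (by linarith)
  obtain ⟨r, hr, hball⟩ := Metric.mem_nhds_iff.mp (mem_interior_iff_mem_nhds.mp hS)
  obtain ⟨t, ht, htj, htw⟩ : ∃ t : ℝ, 0 < t ∧ t * aj < r ∧ t * |w2| < r := by
    have hM : 0 < aj + |w2| + 1 := by positivity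
    refine ⟨r / (aj + |w2| + 1), by positivity, ?_, ?_⟩
    · rw [div_mul_eq_mul_div, div_lt_iff₀ hM]
      nlinarith [abs_nonneg w2]
    · rw [div_mul_eq_mul_div, div_lt_iff₀ hM]
      nlinarith [abs_nonneg w2]
  have hmem : ∀ s : ℝ, |s| = t → (p₀ + s * aj, q₀ + s * w2) ∈ S := by
    intro s hs
    apply hball
    rw [Metric.mem_ball, Prod.dist_eq, max_lt_iff]
    simp only [Real.dist_eq, add_sub_cancel_left, abs_mul, hs, abs_of_pos haj]
    exact ⟨htj, htw⟩
  have hp := hmem t (abs_of_pos ht)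
  have hm := hmem (-t) (by rw [abs_neg, abs_of_pos ht])
  by_contra! hcon
  have h1 := hcon _ hp
  have h2 := hcon _ hm
  simp only [hU] at h1 h2
  have h3 := mul_pos (pow_pos ht 2) hQ
  linarith
end

section
/- For every ε with 0 < ε ≤ 1 there exists a threshold γ̄ ≥ 1, depending only on ε, such that for all αᵢ, αⱼ > 0 satisfying max{αᵢ, αⱼ}/min{αᵢ, αⱼ} > γ̄, one has (8−6ε²)·αᵢ·αⱼ − ε²·(αᵢ² + αⱼ²) < 0. (Hence when the reputation factors of the two units are sufficiently asymmetric, operating both profitably is not an optimal choice.) -/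
theorem stmt9_aux (e m M : ℝ) (he : 0 < e) (hm : 0 < m) (hM : 0 < M)
    (h : M / m > 8 / e ^ 2) :
    (8 - 6 * e ^ 2) * m * M - e ^ 2 * (m ^ 2 + M ^ 2) < 0 := by
  have he2 : 0 < e ^ 2 := by positivity
  have h1 : 8 * m < M * e ^ 2 := (div_lt_div_iff₀ he2 hm).1 h
  have h2 : 8 * m * M < M * e ^ 2 * M := mul_lt_mul_of_pos_right h1 hM
  have h3 : 0 < e ^ 2 * (m * M) := by positivity
  have h4 : 0 < e ^ 2 * m ^ 2 := by positivity
  nlinarith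

/-- For every `ε ∈ (0,1]` there exists `γ̄ ≥ 1`, depending only on `ε`,
such that for all `αᵢ, αⱼ > 0` with `max{αᵢ,αⱼ}/min{αᵢ,αⱼ} > γ̄`, one has
`(8−6ε²)·αᵢ·αⱼ − ε²·(αᵢ² + αⱼ²) < 0`. -/
theorem stmt9 :
    ∀ ε : ℝ, 0 < ε → ε ≤ 1 →
      ∃ γbar : ℝ, 1 ≤ γbar ∧
        ∀ ai aj : ℝ, 0 < ai → 0 < aj →
          max ai aj / min ai aj > γbar →
          (8 - 6 * ε ^ 2) * ai * aj - ε ^ 2 * (ai ^ 2 + aj ^ 2) < 0 := by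
  intro ε h0 h1
  refine ⟨8 / ε ^ 2, ?_, ?_⟩
  · rw [le_div_iff₀ (by positivity)]
    nlinarith
  · intro ai aj hi hj h
    rcases le_total ai aj with hle | hle
    · rw [max_eq_right hle, min_eq_left hle] at h
      exact stmt9_aux ε ai aj h0 hi hj h
    · rw [max_eq_left hle, min_eq_right hle] at h
      have := stmt9_aux ε aj ai h0 hj hi h
      linarith
end

section
/- Theorem 1(i). Assume all parameters positive, 0 < ε < 1, assumption A.1 (d̄ᵢ ≥ αᵢ·(C_S + Cᵢ) + 2·√(αᵢ·(O_S + Oᵢ)) and d̄ⱼ ≥ αⱼ·(C_S + Cⱼ) + 2·max{√(2·αⱼ·(O_S + Oᵢ)), √(αⱼ·Oⱼ)}), assumption A.2 (ε ≤ 2·√(αⱼ·Oⱼ)/(αⱼ·Cᵢ)), and 4·w₁·w₃ − w₂² ≠ 0. If the stationary point (p*_co, q*_co) lies in the topological interior of F_co⁺, then U(p,q) ≤ U(p*_co, q*_co) for every (p,q) ∈ F_co⁺; i.e., the maximum of the coalition's co-existence utility over F_co⁺ is attained at (p*_co, q*_co). -/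
/-- Theorem 1(i): under A.1, A.2 and nondegeneracy of the quadratic,
if the stationary point `(p*_co, q*_co)` lies in the interior of `F_co⁺`, then the
maximum of the coalition's co-existence utility `U` over `F_co⁺` is attained at
`(p*_co, q*_co)`. -/
theorem stmt18 (di dj ai aj Ci Cj CS Oi Oj OS ε : ℝ)
    (hdi : 0 < di) (hdj : 0 < dj) (hai : 0 < ai) (haj : 0 < aj)
    (hCi : 0 < Ci) (hCj : 0 < Cj) (hCS : 0 < CS)
    (hOi : 0 < Oi) (hOj : 0 < Oj) (hOS : 0 < OS)
    (hε0 : 0 < ε) (hε1 : ε < 1)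
    (hA1i : di ≥ ai * (CS + Ci) + 2 * Real.sqrt (ai * (OS + Oi)))
    (hA1j : dj ≥ aj * (CS + Cj)
        + 2 * max (Real.sqrt (2 * aj * (OS + Oi))) (Real.sqrt (aj * Oj)))
    (hA2 : ε ≤ 2 * Real.sqrt (aj * Oj) / (aj * Ci))
    (w1 w2 w3 w4 w5 w6 : ℝ)
    (hw1 : w1 = -(ai * (2 - ε ^ 2)) / 2)
    (hw2 : w2 = ε * (ai + aj) / 2)
    (hw3 : w3 = -aj / 2)
    (hw4 : w4 = (2 * di + ε * dj + ε * aj * Cj - ε * ai * CS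
        + ai * (2 - ε ^ 2) * (Ci + CS)) / 2)
    (hw5 : w5 = (dj - aj * Cj + aj * CS - ε * aj * (Ci + CS)) / 2)
    (hw6 : w6 = -(di + ε * (dj + aj * Cj) / 2) * (Ci + CS)
        - (dj - aj * Cj) / 2 * CS - Oi - OS)
    (hdisc : 4 * w1 * w3 - w2 ^ 2 ≠ 0)
    (pmx psw : ℝ)
    (hpmx : pmx = (di + ε * dj) / ai)
    (hpsw : psw = di / ai + Real.sqrt (aj * Oj) / (ε * ai))
    (θ φ ψ : ℝ → ℝ)
    (hθ : ∀ p, θ p =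
      if p < psw then (dj + ε * ai * p - aj * Cj - 2 * Real.sqrt (aj * Oj)) / aj
      else (dj + ε * di - aj * Cj) / aj - Oj / (ε * ai * p - ε * di))
    (hφ : ∀ p, φ p = (dj + 2 * ε * di - ε * ai * p - aj * Cj) / aj)
    (hψ : ∀ q, ψ q = (2 * di + ε * dj + ε * aj * (Cj + q)) / ((2 - ε ^ 2) * ai))
    (U : ℝ → ℝ → ℝ)
    (hU : ∀ p q, U p q = w1 * p ^ 2 + w2 * p * q + w3 * q ^ 2 + w4 * p + w5 * q + w6)
    (Fco : Set (ℝ × ℝ))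
    (hFco : Fco = {x : ℝ × ℝ | 0 ≤ x.1 ∧ 0 ≤ x.2 ∧
      x.1 ≤ min pmx (ψ x.2) ∧ x.2 ≤ min (θ x.1) (φ x.1)})
    (pco qco : ℝ)
    (hpco : pco = -(2 * w3 * w4 - w2 * w5) / (4 * w1 * w3 - w2 ^ 2))
    (hqco : qco = -(w2 * pco + w5) / (2 * w3))
    (hint : (pco, qco) ∈ interior Fco) :
    ∀ x ∈ Fco, U x.1 x.2 ≤ U pco qco := by
  have hmem := interior_subset hint
  rw [hFco] at hmem
  obtain ⟨_, _, hpm, hqm⟩ := hmem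
  have hp2 : pco ≤ ψ qco := le_trans hpm (min_le_right _ _)
  have hq1 : qco ≤ θ pco := le_trans hqm (min_le_left _ _)
  have hq2 : qco ≤ φ pco := le_trans hqm (min_le_right _ _)
  have hs : 0 < Real.sqrt (aj * Oj) := Real.sqrt_pos.mpr (mul_pos haj hOj)
  have hw3n : w3 < 0 := by rw [hw3]; linarith
  -- first-order conditions
  have e2 : w2 * pco + 2 * w3 * qco + w5 = 0 := by
    have : (2 * w3) ≠ 0 := by linarith
    rw [eq_div_iff this] at hqco
    linarith
  have e0 : pco * (4 * w1 * w3 - w2 ^ 2) = -(2 * w3 * w4 - w2 * w5) := by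
    rwa [eq_div_iff hdisc] at hpco
  have e1 : 2 * w1 * pco + w2 * qco + w4 = 0 := by
    have : 2 * w3 * (2 * w1 * pco + w2 * qco + w4) = 0 := by
      linear_combination e0 + w2 * e2
    rcases mul_eq_zero.mp this with h | h
    · linarith
    · exact h
  -- demand of the competitor is positive
  have hDj : 0 < dj + ε * ai * pco - aj * Cj - aj * qco := by
    by_cases h : pco < psw
    · rw [hθ, if_pos h, le_div_iff₀ haj] at hq1
      linarith
    · rw [hφ, le_div_iff₀ haj] at hq2
      have h' : psw ≤ pco := not_lt.mp h
      have h3 : ε * ai * psw = ε * di + Real.sqrt (aj * Oj) := by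
        rw [hpsw]; field_simp
      have h4 : ε * ai * psw ≤ ε * ai * pco :=
        mul_le_mul_of_nonneg_left h' (by positivity)
      linarith
  have hee : ε ^ 2 < 1 := by nlinarith
  have hDi : 0 ≤ 2 * di + ε * dj + ε * aj * (Cj + qco) - (2 - ε ^ 2) * ai * pco := by
    rw [hψ, le_div_iff₀ (mul_pos (by linarith) hai)] at hp2
    linarith
  -- positive margin
  have hm : 0 < pco - (Ci + CS) := by
    have key : 2 * ai * aj * (1 - ε ^ 2) * (pco - (Ci + CS))
        = aj * (2 * di + ε * dj + ε * aj * (Cj + qco) - (2 - ε ^ 2) * ai * pco)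
          + ε * ai * (dj + ε * ai * pco - aj * Cj - aj * qco) := by
      subst hw1 hw2 hw3 hw4 hw5
      linear_combination (-2 * aj) * e1 + (-2 * ε * ai) * e2
    have hpos : 0 < 2 * ai * aj * (1 - ε ^ 2) * (pco - (Ci + CS)) := by
      rw [key]
      have := mul_nonneg haj.le hDi
      have := mul_pos (mul_pos hε0 hai) hDj
      linarith
    have hc : 0 < 2 * ai * aj * (1 - ε ^ 2) :=
      mul_pos (by positivity) (by linarith)
    exact (mul_pos_iff_of_pos_left hc).mp hpos
  -- hence the Hessian determinant is positive
  have hD : 0 < 4 * w1 * w3 - w2 ^ 2 := by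
    have s1 : 0 ≤ di - ai * (CS + Ci) := by
      have := Real.sqrt_nonneg (ai * (OS + Oi))
      linarith
    have s2 : 0 ≤ dj - aj * (CS + Cj) := by
      have := le_max_right (Real.sqrt (2 * aj * (OS + Oi))) (Real.sqrt (aj * Oj))
      linarith
    have key : (4 * w1 * w3 - w2 ^ 2) * (pco - (Ci + CS))
        = aj * (di - ai * (CS + Ci)) + ε * aj * (aj * (CS + Cj))
          + ε * (ai + 3 * aj) / 4 * ((dj - aj * (CS + Cj)) + ε * ai * (Ci + CS)) := by
      subst hw1 hw2 hw3 hw4 hw5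
      linear_combination e0
    have hpos : 0 < (4 * w1 * w3 - w2 ^ 2) * (pco - (Ci + CS)) := by
      rw [key]
      positivity
    exact (mul_pos_iff_of_pos_right hm).mp hpos
  -- concave quadratic
  rintro ⟨p, q⟩ _
  simp only [hU]
  have key : 4 * w3 * ((w1 * p ^ 2 + w2 * p * q + w3 * q ^ 2 + w4 * p + w5 * q + w6)
      - (w1 * pco ^ 2 + w2 * pco * qco + w3 * qco ^ 2 + w4 * pco + w5 * qco + w6))
      = (2 * w3 * (q - qco) + w2 * (p - pco)) ^ 2
        + (4 * w1 * w3 - w2 ^ 2) * (p - pco) ^ 2 := by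
    linear_combination (4 * w3 * (p - pco)) * e1 + (4 * w3 * (q - qco)) * e2
  have hnn : 0 ≤ (2 * w3 * (q - qco) + w2 * (p - pco)) ^ 2
        + (4 * w1 * w3 - w2 ^ 2) * (p - pco) ^ 2 := by positivity
  rw [← key] at hnn
  by_contra hcon
  have := mul_neg_of_neg_of_pos (show 4 * w3 < 0 by linarith) (sub_pos.mpr (not_le.mp hcon))
  linarith
end

section
/- Theorem 1(ii). Assume all parameters positive, 0 < ε < 1, assumption A.1 (d̄ᵢ ≥ αᵢ·(C_S + Cᵢ) + 2·√(αᵢ·(O_S + Oᵢ)) and d̄ⱼ ≥ αⱼ·(C_S + Cⱼ) + 2·max{√(2·αⱼ·(O_S + Oᵢ)), √(αⱼ·Oⱼ)}), assumption A.2 (ε ≤ 2·√(αⱼ·Oⱼ)/(αⱼ·Cᵢ)), and 4·w₁·w₃ − w₂² ≠ 0. If the stationary point (p*_co, q*_co) does NOT lie in the topological interior of F_co⁺, then there exists a point (p₀,q₀) ∈ F_co⁺ ∩ (𝕃₁ ∪ 𝕃₂ ∪ 𝕃₃ ∪ 𝕃₄) such that U(p,q) ≤ U(p₀,q₀) for all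 (p,q) ∈ F_co⁺, where 𝕃₁ := {(p,q) : q = φ(p)}, 𝕃₂ := {(p,q) : p = ψ(q)}, 𝕃₃ := {(p,q) : q = (d̄ⱼ + ε·αᵢ·p − αⱼ·Cⱼ − 2·√(αⱼ·Oⱼ))/αⱼ}, and 𝕃₄ := {(p,q) : p = p_mx}; i.e., the maximum of U over F_co⁺ is attained on one of these four boundary lines (not on the lines {p = 0} or {q = 0}). -/
lemma aux_deriv_nonpos (g w δ : ℝ) (hδ : 0 < δ)
    (h : ∀ s, 0 < s → s < δ → s * (g + w * s) ≤ 0) : g ≤ 0 := by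
  by_contra hg
  push Not at hg
  have hw : 0 < |w| + 1 := by positivity
  set s := min (δ / 2) (g / (2 * (|w| + 1))) with hs
  have hs0 : 0 < s := lt_min (by linarith) (by positivity)
  have h1 : s ≤ δ / 2 := min_le_left _ _
  have h2 : s ≤ g / (2 * (|w| + 1)) := min_le_right _ _
  rw [le_div_iff₀ (by positivity)] at h2
  have h3 := h s hs0 (by linarith)
  have h4 : -|w| * s ≤ w * s := mul_le_mul_of_nonneg_right (neg_abs_le w) hs0.le
  have h5 : 0 < g + w * s := by nlinarith
  have := mul_pos hs0 h5
  linarith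

/-- The binding upper bound on `q` is piecewise linear. -/
lemma aux_theta (di dj ai aj Cj Oj ε p q : ℝ) (hai : 0 < ai) (haj : 0 < aj) (hOj : 0 < Oj)
    (hε0 : 0 < ε) :
    (q ≤ (if p < di / ai + Real.sqrt (aj * Oj) / (ε * ai) then
        (dj + ε * ai * p - aj * Cj - 2 * Real.sqrt (aj * Oj)) / aj
      else (dj + ε * di - aj * Cj) / aj - Oj / (ε * ai * p - ε * di)) ∧
      q ≤ (dj + 2 * ε * di - ε * ai * p - aj * Cj) / aj) ↔
    (q ≤ (dj + ε * ai * p - aj * Cj - 2 * Real.sqrt (aj * Oj)) / aj ∧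
      q ≤ (dj + 2 * ε * di - ε * ai * p - aj * Cj) / aj) := by
  split_ifs with h
  · rfl
  · push Not at h
    have hr : 0 < Real.sqrt (aj * Oj) := Real.sqrt_pos.2 (by positivity)
    have hr2 : Real.sqrt (aj * Oj) ^ 2 = aj * Oj := Real.sq_sqrt (by positivity)
    set r := Real.sqrt (aj * Oj)
    have e : di / ai + r / (ε * ai) = (ε * di + r) / (ε * ai) := by field_simp
    rw [e, div_le_iff₀ (by positivity)] at h
    have ht : r ≤ ε * ai * p - ε * di := by linarith
    have ht0 : 0 < ε * ai * p - ε * di := by linarith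
    have k1 : (dj + 2 * ε * di - ε * ai * p - aj * Cj) / aj ≤
        (dj + ε * ai * p - aj * Cj - 2 * r) / aj := by
      gcongr ?_ / _
      linarith
    have k2 : (dj + 2 * ε * di - ε * ai * p - aj * Cj) / aj ≤
        (dj + ε * di - aj * Cj) / aj - Oj / (ε * ai * p - ε * di) := by
      have : Oj / (ε * ai * p - ε * di) ≤ (ε * ai * p - ε * di) / aj := by
        rw [div_le_div_iff₀ ht0 haj]
        nlinarith
      have e2 : (dj + 2 * ε * di - ε * ai * p - aj * Cj) / aj =
        (dj + ε * di - aj * Cj) / aj - (ε * ai * p - ε * di) / aj := by ring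
      linarith
    constructor
    · rintro ⟨_, h2⟩
      exact ⟨h2.trans k1, h2⟩
    · rintro ⟨_, h2⟩
      exact ⟨h2.trans k2, h2⟩

/-- Theorem 1(ii): under A.1, A.2 and nondegeneracy of the quadratic,
if the stationary point `(p*_co, q*_co)` does NOT lie in the interior of `F_co⁺`,
then the maximum of `U` over `F_co⁺` is attained at a point of
`F_co⁺ ∩ (𝕃₁ ∪ 𝕃₂ ∪ 𝕃₃ ∪ 𝕃₄)`. -/
theorem stmt19 (di dj ai aj Ci Cj CS Oi Oj OS ε : ℝ)
    (hdi : 0 < di) (hdj : 0 < dj) (hai : 0 < ai) (haj : 0 < aj)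
    (hCi : 0 < Ci) (hCj : 0 < Cj) (hCS : 0 < CS)
    (hOi : 0 < Oi) (hOj : 0 < Oj) (hOS : 0 < OS)
    (hε0 : 0 < ε) (hε1 : ε < 1)
    (hA1i : di ≥ ai * (CS + Ci) + 2 * Real.sqrt (ai * (OS + Oi)))
    (hA1j : dj ≥ aj * (CS + Cj)
        + 2 * max (Real.sqrt (2 * aj * (OS + Oi))) (Real.sqrt (aj * Oj)))
    (hA2 : ε ≤ 2 * Real.sqrt (aj * Oj) / (aj * Ci))
    (w1 w2 w3 w4 w5 w6 : ℝ)
    (hw1 : w1 = -(ai * (2 - ε ^ 2)) / 2)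
    (hw2 : w2 = ε * (ai + aj) / 2)
    (hw3 : w3 = -aj / 2)
    (hw4 : w4 = (2 * di + ε * dj + ε * aj * Cj - ε * ai * CS
        + ai * (2 - ε ^ 2) * (Ci + CS)) / 2)
    (hw5 : w5 = (dj - aj * Cj + aj * CS - ε * aj * (Ci + CS)) / 2)
    (hw6 : w6 = -(di + ε * (dj + aj * Cj) / 2) * (Ci + CS)
        - (dj - aj * Cj) / 2 * CS - Oi - OS)
    (hdisc : 4 * w1 * w3 - w2 ^ 2 ≠ 0)
    (pmx psw : ℝ)
    (hpmx : pmx = (di + ε * dj) / ai)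
    (hpsw : psw = di / ai + Real.sqrt (aj * Oj) / (ε * ai))
    (θ φ ψ : ℝ → ℝ)
    (hθ : ∀ p, θ p =
      if p < psw then (dj + ε * ai * p - aj * Cj - 2 * Real.sqrt (aj * Oj)) / aj
      else (dj + ε * di - aj * Cj) / aj - Oj / (ε * ai * p - ε * di))
    (hφ : ∀ p, φ p = (dj + 2 * ε * di - ε * ai * p - aj * Cj) / aj)
    (hψ : ∀ q, ψ q = (2 * di + ε * dj + ε * aj * (Cj + q)) / ((2 - ε ^ 2) * ai))
    (U : ℝ → ℝ → ℝ)
    (hU : ∀ p q, U p q = w1 * p ^ 2 + w2 * p * q + w3 * q ^ 2 + w4 * p + w5 * q + w6)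
    (Fco : Set (ℝ × ℝ))
    (hFco : Fco = {x : ℝ × ℝ | 0 ≤ x.1 ∧ 0 ≤ x.2 ∧
      x.1 ≤ min pmx (ψ x.2) ∧ x.2 ≤ min (θ x.1) (φ x.1)})
    (L1 L2 L3 L4 : Set (ℝ × ℝ))
    (hL1 : L1 = {x : ℝ × ℝ | x.2 = φ x.1})
    (hL2 : L2 = {x : ℝ × ℝ | x.1 = ψ x.2})
    (hL3 : L3 = {x : ℝ × ℝ |
      x.2 = (dj + ε * ai * x.1 - aj * Cj - 2 * Real.sqrt (aj * Oj)) / aj})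
    (hL4 : L4 = {x : ℝ × ℝ | x.1 = pmx})
    (pco qco : ℝ)
    (hpco : pco = -(2 * w3 * w4 - w2 * w5) / (4 * w1 * w3 - w2 ^ 2))
    (hqco : qco = -(w2 * pco + w5) / (2 * w3))
    (hnint : (pco, qco) ∉ interior Fco) :
    ∃ x₀ ∈ Fco ∩ (L1 ∪ L2 ∪ L3 ∪ L4), ∀ x ∈ Fco, U x.1 x.2 ≤ U x₀.1 x₀.2 := by
  have hr : 0 < Real.sqrt (aj * Oj) := Real.sqrt_pos.2 (by positivity)
  have hdj' : aj * (CS + Cj) + 2 * Real.sqrt (aj * Oj) ≤ dj := by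
    have := le_max_right (Real.sqrt (2 * aj * (OS + Oi))) (Real.sqrt (aj * Oj))
    linarith
  have hdi' : ai * CS < di := by
    have := Real.sqrt_nonneg (ai * (OS + Oi))
    have := mul_pos hai hCi
    linarith
  rw [le_div_iff₀ (by positivity)] at hA2
  have hε2 : 0 < 2 - ε ^ 2 := by nlinarith
  have hw4pos : 0 < w4 := by
    have h1 : ε * (ai * CS) ≤ 1 * (ai * CS) := by gcongr
    have h2 : 0 < ai * (2 - ε ^ 2) * (Ci + CS) := by positivity
    have h3 : 0 < ε * dj := by positivity
    have h4 : 0 < ε * aj * Cj := by positivity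
    rw [hw4]
    linarith
  have hw5pos : 0 < w5 := by
    have h1 : ε * (aj * CS) ≤ 1 * (aj * CS) := by gcongr
    have h2 : 0 < aj * CS := by positivity
    rw [hw5]
    linarith
  have hw2pos : 0 < w2 := by rw [hw2]; positivity
  have hw3neg : w3 < 0 := by rw [hw3]; linarith
  set lin : ℝ → ℝ := fun p => (dj + ε * ai * p - aj * Cj - 2 * Real.sqrt (aj * Oj)) / aj with hlin
  have hmem : ∀ p q, (p, q) ∈ Fco ↔
      0 ≤ p ∧ 0 ≤ q ∧ p ≤ pmx ∧ p ≤ ψ q ∧ q ≤ lin p ∧ q ≤ φ p := by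
    intro p q
    have := aux_theta di dj ai aj Cj Oj ε p q hai haj hOj hε0
    rw [hFco]
    simp only [Set.mem_ofPred_eq, le_min_iff, hθ, hφ, hpsw, hlin]
    rw [this]
    tauto
  have cφ : Continuous φ := by
    have : φ = fun p => (dj + 2 * ε * di - ε * ai * p - aj * Cj) / aj := funext hφ
    rw [this]; fun_prop
  have cψ : Continuous ψ := by
    have : ψ = fun q => (2 * di + ε * dj + ε * aj * (Cj + q)) / ((2 - ε ^ 2) * ai) := funext hψ
    rw [this]; fun_prop
  have cl : Continuous lin := by rw [hlin]; fun_prop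
  have cU : Continuous (fun x : ℝ × ℝ => U x.1 x.2) := by
    have : (fun x : ℝ × ℝ => U x.1 x.2) = fun x => w1 * x.1 ^ 2 + w2 * x.1 * x.2 + w3 * x.2 ^ 2
      + w4 * x.1 + w5 * x.2 + w6 := funext fun x => hU _ _
    rw [this]; fun_prop
  have hFeq : Fco = {x : ℝ × ℝ | 0 ≤ x.1 ∧ 0 ≤ x.2 ∧ x.1 ≤ pmx ∧ x.1 ≤ ψ x.2 ∧
      x.2 ≤ lin x.1 ∧ x.2 ≤ φ x.1} := by
    ext ⟨p, q⟩
    exact hmem p q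
  have hclosed : IsClosed Fco := by
    rw [hFeq]
    simp only [Set.ofPred_and]
    repeat' apply IsClosed.inter
    all_goals apply isClosed_le <;> fun_prop
  have hsub : Fco ⊆ Set.Icc 0 pmx ×ˢ Set.Icc 0 (φ 0) := by
    rintro ⟨p, q⟩ hx
    obtain ⟨h1, h2, h3, h4, h5, h6⟩ := (hmem p q).1 hx
    refine ⟨⟨h1, h3⟩, ⟨h2, h6.trans ?_⟩⟩
    rw [hφ, hφ]
    have : 0 ≤ ε * ai * p := by positivity
    gcongr ?_ / _
    linarith
  have hcomp : IsCompact Fco := (isCompact_Icc.prod isCompact_Icc).of_isClosed_subset hclosed hsub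
  have hne : Fco.Nonempty := by
    refine ⟨(0, 0), (hmem 0 0).2 ⟨le_rfl, le_rfl, ?_, ?_, ?_, ?_⟩⟩
    · rw [hpmx]; positivity
    · rw [hψ]; positivity
    · have := mul_pos haj hCS
      exact div_nonneg (by linarith) haj.le
    · rw [hφ]
      have := mul_pos haj hCS
      have := mul_pos hε0 hdi
      exact div_nonneg (by linarith) haj.le
  obtain ⟨⟨p, q⟩, hx0, hmax⟩ := hcomp.exists_isMaxOn hne cU.continuousOn
  refine ⟨(p, q), ⟨hx0, ?_⟩, fun x hx => hmax hx⟩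
  by_contra hL
  simp only [hL1, hL2, hL3, hL4, Set.mem_union, Set.mem_ofPred_eq, not_or] at hL
  obtain ⟨⟨⟨n1, n2⟩, n3⟩, n4⟩ := hL
  obtain ⟨h1, h2, h3, h4, h5, h6⟩ := (hmem p q).1 hx0
  set V : Set (ℝ × ℝ) := {x | x.1 < pmx ∧ x.1 < ψ x.2 ∧ x.2 < lin x.1 ∧ x.2 < φ x.1} with hV
  have hVo : IsOpen V := by
    simp only [hV, Set.ofPred_and]
    repeat' apply IsOpen.inter
    all_goals apply isOpen_lt <;> fun_prop
  have hxV : (p, q) ∈ V := ⟨lt_of_le_of_ne h3 n4, lt_of_le_of_ne h4 n2, lt_of_le_of_ne h5 n3,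
    lt_of_le_of_ne h6 n1⟩
  have hVF : ∀ a b, 0 ≤ a → 0 ≤ b → (a, b) ∈ V → (a, b) ∈ Fco := fun a b ha hb hv =>
    (hmem a b).2 ⟨ha, hb, hv.1.le, hv.2.1.le, hv.2.2.1.le, hv.2.2.2.le⟩
  obtain ⟨δ, hδ, hball⟩ := Metric.isOpen_iff.1 hVo _ hxV
  have hVp : ∀ s, |s| < δ → (p + s, q) ∈ V := fun s hs => hball (by
    simp [Prod.dist_eq, hs, hδ])
  have hVq : ∀ s, |s| < δ → (p, q + s) ∈ V := fun s hs => hball (by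
    simp [Prod.dist_eq, hs, hδ])
  have hUp : ∀ s, |s| < δ → 0 ≤ p + s → s * (2 * w1 * p + w2 * q + w4 + w1 * s) ≤ 0 := by
    intro s hs hp
    have := hmax (hVF _ _ hp h2 (hVp s hs))
    simp only [Set.mem_ofPred_eq, hU] at this
    linarith
  have hUq : ∀ s, |s| < δ → 0 ≤ q + s → s * (w2 * p + 2 * w3 * q + w5 + w3 * s) ≤ 0 := by
    intro s hs hq
    have := hmax (hVF _ _ h1 hq (hVq s hs))
    simp only [Set.mem_ofPred_eq, hU] at this
    linarith
  have gp : 2 * w1 * p + w2 * q + w4 ≤ 0 := aux_deriv_nonpos _ w1 δ hδ fun s hs hs' =>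
    hUp s (by rwa [abs_of_pos hs]) (by linarith)
  have gq : w2 * p + 2 * w3 * q + w5 ≤ 0 := aux_deriv_nonpos _ w3 δ hδ fun s hs hs' =>
    hUq s (by rwa [abs_of_pos hs]) (by linarith)
  have hp0 : 0 < p := by
    rcases h1.lt_or_eq with h | h
    · exact h
    · have := mul_nonneg hw2pos.le h2
      rw [← h] at gp
      linarith
  have hq0 : 0 < q := by
    rcases h2.lt_or_eq with h | h
    · exact h
    · have := mul_nonneg hw2pos.le h1
      rw [← h] at gq
      linarith
  have gp' : -(2 * w1 * p + w2 * q + w4) ≤ 0 :=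
    aux_deriv_nonpos _ w1 (min δ p) (lt_min hδ hp0) fun s hs hs' => by
      have := hUp (-s) (by rw [abs_neg, abs_of_pos hs]; exact hs'.trans_le (min_le_left _ _))
        (by linarith [hs'.trans_le (min_le_right _ _)])
      linarith
  have gq' : -(w2 * p + 2 * w3 * q + w5) ≤ 0 :=
    aux_deriv_nonpos _ w3 (min δ q) (lt_min hδ hq0) fun s hs hs' => by
      have := hUq (-s) (by rw [abs_neg, abs_of_pos hs]; exact hs'.trans_le (min_le_left _ _))
        (by linarith [hs'.trans_le (min_le_right _ _)])
      linarith
  have ep : 2 * w1 * p + w2 * q + w4 = 0 := by linarith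
  have eq : w2 * p + 2 * w3 * q + w5 = 0 := by linarith
  have hp : pco = p := by
    rw [hpco, div_eq_iff hdisc]
    linear_combination (-2 * w3) * ep + w2 * eq
  have hq : qco = q := by
    rw [hqco, hp, div_eq_iff (by linarith)]
    linear_combination -eq
  apply hnint
  rw [hp, hq, mem_interior]
  refine ⟨V ∩ {x | 0 < x.1 ∧ 0 < x.2}, ?_, ?_, hxV, hp0, hq0⟩
  · rintro ⟨a, b⟩ ⟨hv, ha, hb⟩
    exact hVF a b (le_of_lt ha) (le_of_lt hb) hv
  · refine hVo.inter ?_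
    simp only [Set.ofPred_and]
    apply IsOpen.inter
    all_goals apply isOpen_lt <;> fun_prop
end
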